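/- Let X and Y be real Banach spaces and let G : X → Y be a Daugavet center with ‖G‖ = 1. Then for every y ∈ S_Y, every ε > 0, and every continuous scalar polynomial p on X with sup_{‖z‖≤1} |p(z)| = 1, there exist x ∈ B_X and ω ∈ {−1, 1} such that ω·p(x) > 1 − ε and ‖y + ω·G(x)‖ > 2 − ε. -/

import Mathlib

/-!
A Daugavet center meets every slice: for `v ≠ 0` and a functional `φ`, there is `x` in the unit
ball with `φ x` almost `‖φ‖` and `‖v + G x‖` almost `‖v‖ + 1` (`exists_mem_slice`). A polynomial is
not weakly continuous on the ball, so a single slice does not control it. It does have a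
first-order Taylor expansion with quadratic remainder, uniform on the ball (`IsScalarPoly.taylor`).

Start at a point `x₀` of the ball where `ω * p x₀ > 1 - ε`, and replace it by an average
`x = (x₁ + ⋯ + xₙ) / n`, exchanging one copy of `x₀` for one `xₖ` at a time. The point `xₖ₊₁` is
taken in the slice of the ball determined by the derivative of `ω • p` at the current mixture
`(x₁ + ⋯ + xₖ + (n - k) x₀) / n`, and so that `G xₖ₊₁` is almost additive in norm with
`n • ω • y + G (x₁ + ⋯ + xₖ)`. One exchange lowers the value of `ω • p` by at most
`δ / n + O(1 / n²)`, and `n` of them by `δ + O(1 / n)`, while the norms add up to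
`‖ω • y + G x‖ ≥ 2 - δ`.
-/

/-- A continuous scalar polynomial on a real normed space `X`: a function of the form
`p x = c + ∑_{n=1}^{N} F n (x, …, x)` where each `F n` is a continuous `n`-linear form. -/
def IsScalarPoly {X : Type*} [NormedAddCommGroup X] [NormedSpace ℝ X] (p : X → ℝ) : Prop :=
  ∃ (N : ℕ) (c : ℝ) (F : (n : ℕ) → ContinuousMultilinearMap ℝ (fun _ : Fin n => X) ℝ),
    ∀ x : X, p x = c + ∑ n ∈ Finset.Icc 1 N, F n (fun _ => x)

/-! ### Slices of the ball under a Daugavet center -/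

section Slices

variable {X Y : Type*} [NormedAddCommGroup X] [NormedSpace ℝ X]
  [NormedAddCommGroup Y] [NormedSpace ℝ Y]

/-- The slice property for a nonzero functional, obtained by testing the Daugavet equation on
`φ ⊗ (v / ‖φ‖)` and a point where the norm of the sum is almost attained. -/
lemma exists_mem_slice_of_ne_zero (G : X →L[ℝ] Y) (hG : ‖G‖ = 1)
    (hDC : ∀ (f : X →L[ℝ] ℝ) (y₀ : Y), ‖G + f.smulRight y₀‖ = 1 + ‖f‖ * ‖y₀‖)
    (φ : X →L[ℝ] ℝ) (hφ : φ ≠ 0) (v : Y) (hv : v ≠ 0) (δ : ℝ) (hδ : 0 < δ) :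
    ∃ x : X, ‖x‖ ≤ 1 ∧ ‖φ‖ - δ ≤ φ x ∧ ‖v‖ + 1 - δ ≤ ‖v + G x‖ := by
  have ha : 0 < ‖φ‖ := norm_pos_iff.2 hφ
  have hb : 0 < ‖v‖ := norm_pos_iff.2 hv
  obtain ⟨d, hd0, hd1, hd2⟩ : ∃ d : ℝ, 0 < d ∧ 2 * d ≤ δ ∧ d * ‖φ‖ ≤ δ * ‖v‖ := by
    refine ⟨min (δ / 2) (δ * ‖v‖ / ‖φ‖), by positivity, ?_, ?_⟩
    · linarith [min_le_left (δ / 2) (δ * ‖v‖ / ‖φ‖)]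
    · exact (le_div_iff₀ ha).1 (min_le_right _ _)
  have key : ∃ x : X, ‖x‖ < 1 ∧ 0 ≤ φ x ∧ 1 + ‖v‖ - d < ‖G x + (φ x / ‖φ‖) • v‖ := by
    have hn := hDC φ (‖φ‖⁻¹ • v)
    rw [norm_smul, norm_inv, norm_norm, ← mul_assoc, mul_inv_cancel₀ ha.ne', one_mul] at hn
    obtain ⟨x, hx, hx'⟩ := ContinuousLinearMap.exists_lt_apply_of_lt_opNorm
      (G + φ.smulRight (‖φ‖⁻¹ • v)) (r := 1 + ‖v‖ - d) (by rw [hn]; linarith)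
    have hx2 : 1 + ‖v‖ - d < ‖G x + (φ x / ‖φ‖) • v‖ := by
      simpa [smul_smul, div_eq_mul_inv] using hx'
    rcases le_total 0 (φ x) with h | h
    · exact ⟨x, hx, h, hx2⟩
    · refine ⟨-x, by simpa using hx, by simpa using h, ?_⟩
      rw [map_neg, map_neg, neg_div, neg_smul, ← neg_add, norm_neg]
      exact hx2
  obtain ⟨x, hx, hpos, hlt⟩ := key
  have hGx : ‖G x‖ ≤ 1 := by
    have := G.le_opNorm x
    rw [hG] at this; linarith
  have hle : φ x ≤ ‖φ‖ := by
    have h1 := φ.le_opNorm x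
    have h2 := le_abs_self (φ x)
    rw [Real.norm_eq_abs] at h1
    nlinarith
  have hq1 : φ x / ‖φ‖ ≤ 1 := (div_le_one ha).2 hle
  have hq0 : 0 ≤ φ x / ‖φ‖ := by positivity
  have hqe : φ x / ‖φ‖ * ‖φ‖ = φ x := div_mul_cancel₀ _ ha.ne'
  set q := φ x / ‖φ‖
  have h1 : ‖G x + q • v‖ ≤ ‖G x‖ + q * ‖v‖ := by
    refine (norm_add_le _ _).trans ?_
    rw [norm_smul, Real.norm_of_nonneg hq0]
  have h2 : ‖G x + q • v‖ ≤ ‖v + G x‖ + (1 - q) * ‖v‖ := by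
    have h3 : G x + q • v = (v + G x) - (1 - q) • v := by module
    rw [h3]
    refine (norm_sub_le _ _).trans ?_
    rw [norm_smul, Real.norm_of_nonneg (by linarith)]
  have h4 : (1 - q) * ‖v‖ ≤ d := by linarith
  refine ⟨x, hx.le, ?_, by linarith⟩
  have h5 : (1 - q) * ‖φ‖ * ‖v‖ ≤ δ * ‖v‖ := by nlinarith
  have h6 := le_of_mul_le_mul_right h5 hb
  linarith

lemma exists_mem_slice (G : X →L[ℝ] Y) (hG : ‖G‖ = 1)
    (hDC : ∀ (f : X →L[ℝ] ℝ) (y₀ : Y), ‖G + f.smulRight y₀‖ = 1 + ‖f‖ * ‖y₀‖)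
    (φ : X →L[ℝ] ℝ) (v : Y) (hv : v ≠ 0) (δ : ℝ) (hδ : 0 < δ) :
    ∃ x : X, ‖x‖ ≤ 1 ∧ ‖φ‖ - δ ≤ φ x ∧ ‖v‖ + 1 - δ ≤ ‖v + G x‖ := by
  by_cases hφ : φ = 0
  · have hG0 : G ≠ 0 := by rintro rfl; simp at hG
    obtain ⟨u, hu⟩ : ∃ u, G u ≠ 0 := by
      by_contra! h
      exact hG0 (ContinuousLinearMap.ext h)
    have hu0 : u ≠ 0 := by rintro rfl; simp at hu
    -- The condition on `φ x` is void, so the slice of any nonzero functional will do.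
    obtain ⟨g, hg, -⟩ := exists_dual_vector ℝ u (norm_ne_zero_iff.2 hu0)
    have hg0 : g ≠ 0 := by rintro rfl; simp at hg
    obtain ⟨x, hx, -, hx'⟩ := exists_mem_slice_of_ne_zero G hG hDC g hg0 v hv δ hδ
    exact ⟨x, hx, by simp [hφ, hδ.le], hx'⟩
  · exact exists_mem_slice_of_ne_zero G hG hDC φ hφ v hv δ hδ

end Slices

/-! ### Uniform Taylor expansion of polynomials -/

section Taylor

variable {X : Type*} [NormedAddCommGroup X] [NormedSpace ℝ X]

/-- `p` has a first-order Taylor expansion at every point of the closed unit ball, with a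
remainder at most `C * ‖w - z‖ ^ 2` for `w` in the ball and `C` independent of the point. -/
def HasUniformTaylor (p : X → ℝ) : Prop :=
  ∃ C : ℝ, 0 ≤ C ∧ ∀ z : X, ‖z‖ ≤ 1 → ∃ φ : X →L[ℝ] ℝ, ∀ w : X, ‖w‖ ≤ 1 →
    |p w - p z - φ (w - z)| ≤ C * ‖w - z‖ ^ 2

/-- Taylor expansion of a homogeneous polynomial. The constant is proportional to the norm of the
multilinear form, because the induction on the degree freezes the first variable at a moving
point. -/
lemma multilinear_taylor (n : ℕ) : ∃ C : ℝ, 0 ≤ C ∧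
    ∀ (F : ContinuousMultilinearMap ℝ (fun _ : Fin n => X) ℝ) (z : X), ‖z‖ ≤ 1 →
      ∃ φ : X →L[ℝ] ℝ, ∀ w : X, ‖w‖ ≤ 1 →
        |F (fun _ => w) - F (fun _ => z) - φ (w - z)| ≤ C * ‖F‖ * ‖w - z‖ ^ 2 := by
  induction n with
  | zero =>
    refine ⟨0, le_rfl, fun F z _ => ⟨0, fun w _ => ?_⟩⟩
    have : (fun _ : Fin 0 => w) = fun _ => z := Subsingleton.elim _ _
    simp [this]
  | succ n ih =>
    obtain ⟨C, hC, ih⟩ := ih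
    refine ⟨C + n, by positivity, fun F z hz => ?_⟩
    obtain ⟨φ, hφ⟩ := ih (F.curryLeft z) z hz
    have hcurry : ∀ a b : X, F.curryLeft a (fun _ => b) = F (Fin.cons a fun _ => b) :=
      fun a b => rfl
    have hconst : ∀ a : X, F (fun _ => a) = F.curryLeft a (fun _ => a) := by
      intro a
      rw [hcurry]
      congr 1
      ext i
      refine Fin.cases ?_ (fun j => ?_) i <;> simp
    have hnorm : ∀ a : X, ‖F.curryLeft a‖ ≤ ‖F‖ * ‖a‖ := by
      intro a
      have := F.curryLeft.le_opNorm a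
      rwa [F.curryLeft_norm] at this
    refine ⟨φ + (ContinuousMultilinearMap.apply ℝ (fun _ : Fin n => X) ℝ (fun _ => z)).comp
      F.curryLeft, fun w hw => ?_⟩
    have h1 := hφ w hw
    -- The increment of the remaining variables inside the term that is linear in `w - z`.
    have h2 : |F.curryLeft (w - z) (fun _ => w) - F.curryLeft (w - z) (fun _ => z)|
        ≤ n * ‖F‖ * ‖w - z‖ ^ 2 := by
      have h := (F.curryLeft (w - z)).norm_image_sub_le (fun _ => w) (fun _ => z)
      rw [Real.norm_eq_abs, Fintype.card_fin] at h
      refine h.trans ?_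
      have hw' : ‖fun _ : Fin n => w‖ ≤ 1 := (pi_norm_const_le w).trans hw
      have hz' : ‖fun _ : Fin n => z‖ ≤ 1 := (pi_norm_const_le z).trans hz
      have hm : max ‖fun _ : Fin n => w‖ ‖fun _ : Fin n => z‖ ^ (n - 1) ≤ 1 :=
        pow_le_one₀ (le_max_of_le_left (norm_nonneg _)) (max_le hw' hz')
      have hd : ‖(fun _ : Fin n => w) - fun _ => z‖ ≤ ‖w - z‖ := pi_norm_const_le (w - z)
      calc _ ≤ (‖F‖ * ‖w - z‖) * n * 1 * ‖w - z‖ := by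
            gcongr
            exact hnorm _
        _ = _ := by ring
    have h3 : C * ‖F.curryLeft z‖ * ‖w - z‖ ^ 2 ≤ C * ‖F‖ * ‖w - z‖ ^ 2 := by
      have : ‖F.curryLeft z‖ ≤ ‖F‖ := (hnorm z).trans (mul_le_of_le_one_right (norm_nonneg _) hz)
      gcongr
    have h4 : F.curryLeft w (fun _ => w)
        = F.curryLeft z (fun _ => w) + F.curryLeft (w - z) (fun _ => w) := by
      conv_lhs => rw [show w = z + (w - z) by abel, map_add]
      simp
    have h5 : F (fun _ => w) - F (fun _ => z) - (φ + (ContinuousMultilinearMap.apply ℝ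
          (fun _ : Fin n => X) ℝ (fun _ => z)).comp F.curryLeft) (w - z)
        = (F.curryLeft z (fun _ => w) - F.curryLeft z (fun _ => z) - φ (w - z))
          + (F.curryLeft (w - z) (fun _ => w) - F.curryLeft (w - z) (fun _ => z)) := by
      have h6 : (φ + (ContinuousMultilinearMap.apply ℝ
          (fun _ : Fin n => X) ℝ (fun _ => z)).comp F.curryLeft) (w - z)
          = φ (w - z) + F.curryLeft (w - z) (fun _ => z) := rfl
      rw [h6, hconst w, hconst z, h4]
      ring
    rw [h5]
    refine (abs_add_le _ _).trans ?_
    linarith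

lemma HasUniformTaylor.add {p q : X → ℝ} (hp : HasUniformTaylor p) (hq : HasUniformTaylor q) :
    HasUniformTaylor (fun x => p x + q x) := by
  obtain ⟨C, hC, h⟩ := hp
  obtain ⟨D, hD, k⟩ := hq
  refine ⟨C + D, by positivity, fun z hz => ?_⟩
  obtain ⟨φ, hφ⟩ := h z hz
  obtain ⟨ψ, hψ⟩ := k z hz
  refine ⟨φ + ψ, fun w hw => ?_⟩
  have e : p w + q w - (p z + q z) - (φ + ψ) (w - z)
      = (p w - p z - φ (w - z)) + (q w - q z - ψ (w - z)) := by
    rw [add_apply]; ring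
  rw [e]
  refine (abs_add_le _ _).trans ?_
  linarith [hφ w hw, hψ w hw]

lemma HasUniformTaylor.const_mul {p : X → ℝ} (hp : HasUniformTaylor p) (c : ℝ) :
    HasUniformTaylor (fun x => c * p x) := by
  obtain ⟨C, hC, h⟩ := hp
  refine ⟨|c| * C, by positivity, fun z hz => ?_⟩
  obtain ⟨φ, hφ⟩ := h z hz
  refine ⟨c • φ, fun w hw => ?_⟩
  have e : c * p w - c * p z - (c • φ) (w - z) = c * (p w - p z - φ (w - z)) := by
    rw [smul_apply, smul_eq_mul]; ring
  rw [e, abs_mul, mul_assoc]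
  exact mul_le_mul_of_nonneg_left (hφ w hw) (abs_nonneg c)

lemma hasUniformTaylor_const (c : ℝ) : HasUniformTaylor (fun _ : X => c) :=
  ⟨0, le_rfl, fun _ _ => ⟨0, fun _ _ => by simp⟩⟩

lemma IsScalarPoly.taylor {p : X → ℝ} (hp : IsScalarPoly p) : HasUniformTaylor p := by
  obtain ⟨N, c, F, hF⟩ := hp
  rw [funext hF]
  refine (hasUniformTaylor_const c).add ?_
  generalize Finset.Icc 1 N = s
  induction s using Finset.induction_on with
  | empty => simpa using hasUniformTaylor_const (X := X) 0
  | insert a s ha ih =>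
    simp only [Finset.sum_insert ha]
    refine HasUniformTaylor.add ?_ ih
    obtain ⟨C, hC, h⟩ := multilinear_taylor (X := X) a
    exact ⟨C * ‖F a‖, by positivity, fun z hz => h (F a) z hz⟩

end Taylor

/-! ### Averaging points of slices -/

section Exchange

variable {X Y : Type*} [NormedAddCommGroup X] [NormedSpace ℝ X]
  [NormedAddCommGroup Y] [NormedSpace ℝ Y]

/-- The exchange of `k` copies of `x₀`, each of weight `t`. Here `w = t • (x₁ + ⋯ + xₖ)`, so that
`w + (1 - k * t) • x₀` is the current mixture. -/
lemma exists_exchange (G : X →L[ℝ] Y) (hG : ‖G‖ = 1)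
    (hDC : ∀ (f : X →L[ℝ] ℝ) (y₀ : Y), ‖G + f.smulRight y₀‖ = 1 + ‖f‖ * ‖y₀‖)
    (y : Y) (hy : ‖y‖ = 1) (p : X → ℝ) (C : ℝ) (hC : 0 ≤ C)
    (hp : ∀ z : X, ‖z‖ ≤ 1 → ∃ φ : X →L[ℝ] ℝ, ∀ w : X, ‖w‖ ≤ 1 →
      |p w - p z - φ (w - z)| ≤ C * ‖w - z‖ ^ 2)
    (x₀ : X) (hx₀ : ‖x₀‖ ≤ 1) (δ : ℝ) (hδ : 0 < δ) (hδ1 : δ ≤ 1) (t : ℝ) (ht : 0 < t) (k : ℕ)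
    (hk : k * t ≤ 1) :
    ∃ w : X, ‖w‖ ≤ k * t ∧ 1 + k * t * (1 - δ) ≤ ‖y + G w‖ ∧
      p x₀ - k * t * (δ + 4 * C * t) ≤ p (w + (1 - k * t) • x₀) := by
  induction k with
  | zero => exact ⟨0, by simp, by simp [hy], by simp⟩
  | succ k ih =>
    push_cast at hk ⊢
    have hkt : k * t ≤ 1 := by linarith
    obtain ⟨w, hw, hyw, hpw⟩ := ih hkt
    have hkt0 : 0 ≤ k * t := by positivity
    have hmix : ∀ (u : X) (s : ℝ), ‖u‖ ≤ s → s ≤ 1 → ‖u + (1 - s) • x₀‖ ≤ 1 := by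
      intro u s hu hs
      refine (norm_add_le _ _).trans ?_
      rw [norm_smul, Real.norm_of_nonneg (by linarith)]
      nlinarith
    obtain ⟨φ, hφ⟩ := hp _ (hmix w _ hw hkt)
    have hv : t⁻¹ • (y + G w) ≠ 0 := by
      refine smul_ne_zero (inv_ne_zero ht.ne') (norm_pos_iff.1 ?_)
      nlinarith
    obtain ⟨x, hx, hφx, hGx⟩ := exists_mem_slice G hG hDC φ _ hv δ hδ
    have hw' : ‖w + t • x‖ ≤ (k + 1) * t := by
      refine (norm_add_le _ _).trans ?_
      rw [norm_smul, Real.norm_of_nonneg ht.le]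
      nlinarith
    refine ⟨w + t • x, hw', ?_, ?_⟩
    · have e : y + G (w + t • x) = t • (t⁻¹ • (y + G w) + G x) := by
        rw [smul_add, smul_inv_smul₀ ht.ne', map_add, map_smul, add_assoc]
      rw [e, norm_smul, Real.norm_of_nonneg ht.le]
      rw [norm_smul, norm_inv, Real.norm_of_nonneg ht.le] at hGx
      have h := mul_le_mul_of_nonneg_left hGx ht.le
      have h2 : t * (t⁻¹ * ‖y + G w‖ + 1 - δ) = ‖y + G w‖ + t * (1 - δ) := by
        field_simp
        ring
      linarith
    · have h := hφ _ (hmix _ _ hw' hk)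
      have e : w + t • x + (1 - (k + 1) * t) • x₀ - (w + (1 - k * t) • x₀) = t • (x - x₀) := by
        module
      rw [e, map_smul, map_sub, norm_smul, Real.norm_of_nonneg ht.le, smul_eq_mul] at h
      have h1 := (abs_le.1 h).1
      have hx2 : ‖x - x₀‖ ≤ 2 := (norm_sub_le _ _).trans (by linarith)
      have h2 : C * (t * ‖x - x₀‖) ^ 2 ≤ C * (t * 2) ^ 2 := by gcongr
      have h3 : φ x₀ ≤ ‖φ‖ := by
        have h4 := φ.le_opNorm x₀
        have h5 := le_abs_self (φ x₀)
        rw [Real.norm_eq_abs] at h4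
        have h6 := mul_le_of_le_one_right (norm_nonneg φ) hx₀
        linarith
      have h7 : -(t * δ) ≤ t * (φ x - φ x₀) := by nlinarith
      linarith

end Exchange

/-- a norm-one Daugavet center `G : X → Y` satisfies the geometric
characterization of polynomial Daugavet centers. -/
theorem daugavet_center_polynomial_geometric_condition
    {X Y : Type*} [NormedAddCommGroup X] [NormedSpace ℝ X] [CompleteSpace X]
    [NormedAddCommGroup Y] [NormedSpace ℝ Y] [CompleteSpace Y]
    (G : X →L[ℝ] Y) (hG : ‖G‖ = 1)
    (hDC : ∀ (f : X →L[ℝ] ℝ) (y₀ : Y), ‖G + f.smulRight y₀‖ = 1 + ‖f‖ * ‖y₀‖) :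
    ∀ (y : Y), ‖y‖ = 1 → ∀ ε > (0 : ℝ),
      ∀ (p : X → ℝ), IsScalarPoly p →
        (⨆ z : {z : X // ‖z‖ ≤ 1}, |p z|) = 1 →
          ∃ (x : X) (ω : ℝ), ‖x‖ ≤ 1 ∧ (ω = 1 ∨ ω = -1) ∧
            ω * p x > 1 - ε ∧ ‖y + ω • G x‖ > 2 - ε := by
  intro y hy ε hε p hp hsup
  have : Nonempty {z : X // ‖z‖ ≤ 1} := ⟨⟨0, by simp⟩⟩
  obtain ⟨⟨x₀, hx₀⟩, hpx₀⟩ := exists_lt_of_lt_ciSup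
    (show 1 - ε < ⨆ z : {z : X // ‖z‖ ≤ 1}, |p z| by rw [hsup]; linarith)
  obtain ⟨ω, hω, hωp⟩ : ∃ ω : ℝ, (ω = 1 ∨ ω = -1) ∧ 1 - ε < ω * p x₀ := by
    rcases abs_cases (p x₀) with ⟨h, -⟩ | ⟨h, -⟩
    · exact ⟨1, Or.inl rfl, by simpa [h] using hpx₀⟩
    · exact ⟨-1, Or.inr rfl, by simpa [h] using hpx₀⟩
  have hω1 : ‖ω‖ = 1 := by rcases hω with rfl | rfl <;> simp
  have hωω : ω * ω = 1 := by rcases hω with rfl | rfl <;> norm_num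
  obtain ⟨C, hC, hT⟩ := hp.taylor.const_mul ω
  obtain ⟨δ, hδ, hδ1, hδε, hδg⟩ : ∃ δ : ℝ, 0 < δ ∧ δ ≤ 1 ∧ δ < ε ∧
      δ ≤ (ω * p x₀ - (1 - ε)) / 2 := by
    have hg : 0 < (ω * p x₀ - (1 - ε)) / 2 := by linarith
    refine ⟨min (min 1 (ε / 2)) ((ω * p x₀ - (1 - ε)) / 2), by positivity, ?_, ?_,
      min_le_right _ _⟩
    · exact (min_le_left _ _).trans (min_le_left _ _)
    · have := (min_le_left (min 1 (ε / 2)) ((ω * p x₀ - (1 - ε)) / 2)).trans (min_le_right _ _)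
      linarith
  obtain ⟨m, hm⟩ := exists_nat_gt (4 * C / δ)
  have hm0 : (0 : ℝ) < m := lt_of_le_of_lt (by positivity) hm
  have hmt : (m : ℝ) * (m : ℝ)⁻¹ = 1 := mul_inv_cancel₀ hm0.ne'
  have hCt : 4 * C * (m : ℝ)⁻¹ < δ := by
    rw [div_lt_iff₀ hδ] at hm
    rw [← div_eq_mul_inv, div_lt_iff₀ hm0]
    linarith
  obtain ⟨x, hx, hyx, hpx⟩ := exists_exchange G hG hDC (ω • y) (by rw [norm_smul, hω1, hy, one_mul])
    (fun x => ω * p x) C hC hT x₀ hx₀ δ hδ hδ1 (m : ℝ)⁻¹ (inv_pos.2 hm0) m hmt.le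
  simp only [hmt, sub_self, zero_smul, add_zero, one_mul] at hx hyx hpx
  refine ⟨x, ω, hx, hω, by linarith, ?_⟩
  have e : y + ω • G x = ω • (ω • y + G x) := by
    rw [smul_add, smul_smul, hωω, one_smul]
  rw [e, norm_smul, hω1, one_mul]
  linarith
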